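/- Let G be a finite group, H a finite abelian group, k a field of characteristic 0, α' : G × G → H a normalized 2-cocycle (α'(g,h)·α'(g*h,l) = α'(h,l)·α'(g,h*l), α'(e,e) = e_H), χ : H → kˣ a group homomorphism, and set α := χ ∘ α' (a normalized 2-cocycle with values in kˣ). Let G^{α'} be the central extension with underlying set H × G and multiplication (a,g)·(a',g') = (a·a'·α'(g,g'), g·g'). Let A be a G-Frobenius algebra over k, and define A^{α'} := ⊕_{(a,g) ∈ H×G} A_g ⊗ k·a with multiplication (x⊗a)·(y⊗a') := (x·y) ⊗ (a·a'·α'(g,g')) for x ∈ A_g, y ∈ A_{g'}. Define i : A → A^{α'} by i(x) = x ⊗ e_H, and res : A^{α'} → A by res(x ⊗ a) = χ(a)·x. Then: (i) A^{α'} is a G^{α'}-graded associative unital k-algebra with unit 1 ⊗ e_H; (ii) for all homogeneous x ∈ A_g, y ∈ A_{g'}: res(i(x)·i(y)) = α(g,g')·(x·y), i.e. res ∘ μ^{α'} ∘ (i ⊗ i) equals the multiplication of the discrete-torsion twist A_α of A (in which a ∘^α b = α(g,g')·(a∘b)); so the twist A_α lifts to the G^{α'}-Frobenius algebra A^{α'}.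 -/

import Mathlib

/-- A `G`-Frobenius algebra over a field `k` of characteristic zero (Kaufmann):
a finite-dimensional `G`-graded `k`-vector space `A = ⊕_g A_g` (the grading given by
submodules together with the projections onto them), with an associative bilinear
multiplication respecting the grading, unit `1 ∈ A_e`, a nondegenerate graded invariant
bilinear form `η`, a `G`-action `φ` by algebra automorphisms with
`φ_g(A_h) ⊆ A_{g h g⁻¹}`, and a character `χ : G → kˣ`, satisfying twisted
commutativity, projective self-invariance, projective invariance of the metric and the
projective trace axiom. -/
structure GFrobeniusAlgebra (G : Type) [Group G] [Fintype G]
    (k : Type) [Field k] [CharZero k]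
    (A : Type) [AddCommGroup A] [Module k A] : Type where
  grading : G → Submodule k A
  proj : G → A →ₗ[k] A
  proj_mem : ∀ (g : G) (a : A), proj g a ∈ grading g
  proj_of_mem : ∀ (g : G), ∀ a ∈ grading g, proj g a = a
  proj_of_ne : ∀ (g h : G), g ≠ h → ∀ a ∈ grading g, proj h a = 0
  sum_proj : ∀ a : A, (∑ g : G, proj g a) = a
  finiteDim : FiniteDimensional k A
  mul : A →ₗ[k] A →ₗ[k] A
  mul_assoc' : ∀ a b c : A, mul (mul a b) c = mul a (mul b c)
  one : A
  one_mem : one ∈ grading 1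
  one_mul' : ∀ a : A, mul one a = a
  mul_one' : ∀ a : A, mul a one = a
  mul_mem : ∀ (g h : G), ∀ a ∈ grading g, ∀ b ∈ grading h, mul a b ∈ grading (g * h)
  η : A →ₗ[k] A →ₗ[k] k
  η_nondeg : ∀ a : A, (∀ b : A, η a b = 0) → a = 0
  η_graded : ∀ (g h : G), g * h ≠ 1 → ∀ a ∈ grading g, ∀ b ∈ grading h, η a b = 0
  η_invariant : ∀ a b c : A, η a (mul b c) = η (mul a b) c
  φ : G → A →ₗ[k] A
  φ_one : φ 1 = LinearMap.id
  φ_mul : ∀ g h : G, φ (g * h) = φ g ∘ₗ φ h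
  φ_algebra : ∀ (g : G) (a b : A), φ g (mul a b) = mul (φ g a) (φ g b)
  φ_unit : ∀ g : G, φ g one = one
  φ_grading : ∀ (g h : G), ∀ a ∈ grading h, φ g a ∈ grading (g * h * g⁻¹)
  χ : G →* kˣ
  twisted_comm : ∀ (g : G), ∀ a ∈ grading g, ∀ b : A, mul a b = mul (φ g b) a
  self_invariance : ∀ (g : G), ∀ a ∈ grading g, φ g a = (((χ g)⁻¹ : kˣ) : k) • a
  metric_invariance : ∀ (g : G) (a b : A),
    η (φ g a) (φ g b) = ((((χ g)⁻¹ : kˣ) : k)) ^ 2 * η a b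
  trace_axiom : ∀ (g h : G), ∀ c ∈ grading (g * h * g⁻¹ * h⁻¹),
    ((χ h : kˣ) : k) * LinearMap.trace k A (proj g ∘ₗ mul c ∘ₗ φ h ∘ₗ proj g)
      = ((χ g⁻¹ : kˣ) : k) * LinearMap.trace k A (proj h ∘ₗ φ g⁻¹ ∘ₗ mul c ∘ₗ proj h)

/-- The multiplication of the crossed product `A^{α'} = A #_{α'} k[H] = ⊕_{(a,g)} A_g ⊗ k·a`
(encoded as functions `H → A`, the `(a,g)`-component living at position `a` in degree `g`):
`(x ⊗ a)·(y ⊗ a') = (x·y) ⊗ (a·a'·α'(g,g'))` for `x ∈ A_g`, `y ∈ A_{g'}`. -/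
noncomputable def crossedMul {G : Type} [Group G] [Fintype G] {H : Type} [CommGroup H]
    [Fintype H] [DecidableEq H] {k : Type} [Field k] [CharZero k]
    {A : Type} [AddCommGroup A] [Module k A] (F : GFrobeniusAlgebra G k A)
    (α' : G → G → H) (f f' : H → A) : H → A := fun b =>
  ∑ a : H, ∑ a' : H, ∑ g : G, ∑ g' : G,
    if a * a' * α' g g' = b then F.mul (F.proj g (f a)) (F.proj g' (f' a')) else 0

/-- The `G^{α'}`-grading of the crossed product `A^{α'}`: the component of degree
`(a, g) ∈ H × G = G^{α'}` is `A_g ⊗ k·a`, i.e. functions supported at `a` with value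
in `A_g`. -/
noncomputable def crossedGrading {G : Type} [Group G] [Fintype G] {H : Type} [CommGroup H]
    {k : Type} [Field k] [CharZero k]
    {A : Type} [AddCommGroup A] [Module k A] (F : GFrobeniusAlgebra G k A)
    (p : H × G) : Submodule k (H → A) where
  carrier := {f | f p.1 ∈ F.grading p.2 ∧ ∀ b : H, b ≠ p.1 → f b = 0}
  add_mem' := by
    intro f f' hf hf'
    refine ⟨add_mem hf.1 hf'.1, fun b hb => ?_⟩
    simp [Pi.add_apply, hf.2 b hb, hf'.2 b hb]
  zero_mem' := ⟨zero_mem _, fun _ _ => rfl⟩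
  smul_mem' := by
    intro c f hf
    refine ⟨Submodule.smul_mem _ _ hf.1, fun b hb => ?_⟩
    simp [Pi.smul_apply, hf.2 b hb]

/-- The unit `1 ⊗ e_H` of `A^{α'}`; also the lifting map `i : A → A^{α'}`, `x ↦ x ⊗ e_H`,
is `crossedIota F x`. -/
noncomputable def crossedIota {H : Type} [CommGroup H] [DecidableEq H]
    {A : Type} [AddCommGroup A] (x : A) : H → A := fun b =>
  if b = 1 then x else 0

/-- The push-down map `res : A^{α'} → A`, `x ⊗ a ↦ χ(a)·x`, associated to a character
`χ : H → kˣ`. -/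
noncomputable def crossedRes {H : Type} [CommGroup H] [Fintype H] {k : Type} [Field k]
    {A : Type} [AddCommGroup A] [Module k A] (χH : H →* kˣ) (f : H → A) : A :=
  ∑ a : H, ((χH a : kˣ) : k) • f a

theorem cocycle_one_left {G H : Type} [Group G] [CommGroup H] {α' : G → G → H}
    (hcoc : ∀ g h l : G, α' g h * α' (g * h) l = α' h l * α' g (h * l))
    (hnorm : α' 1 1 = 1) (g : G) : α' 1 g = 1 := by
  simpa [hnorm] using hcoc 1 1 g

theorem cocycle_one_right {G H : Type} [Group G] [CommGroup H] {α' : G → G → H}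
    (hcoc : ∀ g h l : G, α' g h * α' (g * h) l = α' h l * α' g (h * l))
    (hnorm : α' 1 1 = 1) (g : G) : α' g 1 = 1 := by
  simpa [hnorm] using hcoc g 1 1

theorem crossedIota_eq_single {H : Type} [CommGroup H] [DecidableEq H] {A : Type} [AddCommGroup A]
    (x : A) : (crossedIota x : H → A) = Pi.single 1 x := by
  ext b
  simp [crossedIota, Pi.single_apply]

theorem crossedRes_single {H : Type} [CommGroup H] [Fintype H] [DecidableEq H]
    {k : Type} [Field k] {A : Type} [AddCommGroup A] [Module k A] (χH : H →* kˣ) (a : H) (x : A) :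
    crossedRes χH (Pi.single a x) = ((χH a : kˣ) : k) • x := by
  unfold crossedRes
  rw [Finset.sum_eq_single a]
  · simp
  · intro b _ hb
    simp [Pi.single_eq_of_ne hb]
  · simp

theorem single_mem_crossedGrading {G : Type} [Group G] [Fintype G] {H : Type} [CommGroup H]
    [DecidableEq H] {k : Type} [Field k] [CharZero k] {A : Type} [AddCommGroup A] [Module k A]
    (F : GFrobeniusAlgebra G k A) {a : H} {g : G} {x : A} (hx : x ∈ F.grading g) :
    (Pi.single a x : H → A) ∈ crossedGrading F (a, g) :=
  ⟨by simpa using hx, fun _ hb => by simp [show _ ≠ a from hb]⟩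

theorem eq_single_of_mem_crossedGrading {G : Type} [Group G] [Fintype G] {H : Type} [CommGroup H]
    [DecidableEq H] {k : Type} [Field k] [CharZero k] {A : Type} [AddCommGroup A] [Module k A]
    (F : GFrobeniusAlgebra G k A) {p : H × G} {f : H → A} (hf : f ∈ crossedGrading F p) :
    f = Pi.single p.1 (f p.1) := by
  ext b
  by_cases hb : b = p.1
  · simp [hb]
  · rw [Pi.single_eq_of_ne hb, hf.2 b hb]

/-- An additive property of elements of the crossed product may be checked on homogeneous
elements. -/
theorem crossedProduct_induction {G : Type} [Group G] [Fintype G]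
    {H : Type} [Fintype H] [DecidableEq H] {k : Type} [Field k] [CharZero k]
    {A : Type} [AddCommGroup A] [Module k A] (F : GFrobeniusAlgebra G k A)
    {P : (H → A) → Prop} (zero : P 0)
    (add : ∀ f f', P f → P f' → P (f + f'))
    (single : ∀ (a : H) (g : G), ∀ x ∈ F.grading g, P (Pi.single a x)) (f : H → A) : P f := by
  have key : ∀ (a : H) (x : A), P (Pi.single a x) := fun a x => by
    rw [← F.sum_proj x, ← AddMonoidHom.single_apply, map_sum]
    exact Finset.sum_induction _ P add zero fun g _ => single a g _ (F.proj_mem g x)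
  rw [← Finset.univ_sum_single f]
  exact Finset.sum_induction _ P add zero fun a _ => key a (f a)

section CrossedProduct

variable {G : Type} [Group G] [Fintype G] {H : Type} [CommGroup H] [Fintype H] [DecidableEq H]
  {k : Type} [Field k] [CharZero k] {A : Type} [AddCommGroup A] [Module k A]
  (F : GFrobeniusAlgebra G k A) (α' : G → G → H)

theorem crossedMul_add_left (f₁ f₂ f₃ : H → A) :
    crossedMul F α' (f₁ + f₂) f₃ = crossedMul F α' f₁ f₃ + crossedMul F α' f₂ f₃ := by
  ext b
  simp only [crossedMul, Pi.add_apply, map_add, LinearMap.add_apply, ← Finset.sum_add_distrib]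
  refine Finset.sum_congr rfl fun a _ => Finset.sum_congr rfl fun a' _ =>
    Finset.sum_congr rfl fun g _ => Finset.sum_congr rfl fun g' _ => ?_
  split_ifs <;> simp

theorem crossedMul_add_right (f₁ f₂ f₃ : H → A) :
    crossedMul F α' f₁ (f₂ + f₃) = crossedMul F α' f₁ f₂ + crossedMul F α' f₁ f₃ := by
  ext b
  simp only [crossedMul, Pi.add_apply, map_add, ← Finset.sum_add_distrib]
  refine Finset.sum_congr rfl fun a _ => Finset.sum_congr rfl fun a' _ =>
    Finset.sum_congr rfl fun g _ => Finset.sum_congr rfl fun g' _ => ?_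
  split_ifs <;> simp

theorem crossedMul_smul_left (c : k) (f₁ f₂ : H → A) :
    crossedMul F α' (c • f₁) f₂ = c • crossedMul F α' f₁ f₂ := by
  ext b
  simp only [crossedMul, Pi.smul_apply, map_smul, LinearMap.smul_apply, Finset.smul_sum,
    smul_ite, smul_zero]

theorem crossedMul_smul_right (c : k) (f₁ f₂ : H → A) :
    crossedMul F α' f₁ (c • f₂) = c • crossedMul F α' f₁ f₂ := by
  ext b
  simp only [crossedMul, Pi.smul_apply, map_smul, Finset.smul_sum, smul_ite, smul_zero]

theorem crossedMul_zero_left (f : H → A) : crossedMul F α' 0 f = 0 := by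
  simpa using crossedMul_smul_left F α' 0 0 f

theorem crossedMul_zero_right (f : H → A) : crossedMul F α' f 0 = 0 := by
  simpa using crossedMul_smul_right F α' 0 f 0

/-- The product of homogeneous elements: `(x ⊗ a)(y ⊗ a') = (x y) ⊗ (a a' α'(g, g'))`. -/
theorem crossedMul_single {g g' : G} {x y : A} (hx : x ∈ F.grading g) (hy : y ∈ F.grading g')
    (a a' : H) :
    crossedMul F α' (Pi.single a x) (Pi.single a' y)
      = Pi.single (a * a' * α' g g') (F.mul x y) := by
  ext b
  unfold crossedMul
  rw [Finset.sum_eq_single a, Finset.sum_eq_single a', Finset.sum_eq_single g,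
    Finset.sum_eq_single g']
  · simp [Pi.single_apply, F.proj_of_mem g x hx, F.proj_of_mem g' y hy, eq_comm]
  · intro l _ hl
    simp [F.proj_of_ne g' l hl.symm y hy]
  · simp
  · intro l _ hl
    simp [F.proj_of_ne g l hl.symm x hx]
  · simp
  · intro c _ hc
    simp [Pi.single_eq_of_ne hc]
  · simp
  · intro c _ hc
    simp [Pi.single_eq_of_ne hc]
  · simp

variable {α'}

theorem crossedMul_assoc
    (hcoc : ∀ g h l : G, α' g h * α' (g * h) l = α' h l * α' g (h * l)) (f₁ f₂ f₃ : H → A) :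
    crossedMul F α' (crossedMul F α' f₁ f₂) f₃
      = crossedMul F α' f₁ (crossedMul F α' f₂ f₃) := by
  refine crossedProduct_induction F (P := fun f => crossedMul F α' (crossedMul F α' f f₂) f₃
      = crossedMul F α' f (crossedMul F α' f₂ f₃)) (by simp only [crossedMul_zero_left])
    (fun f f' hf hf' => by simp only [crossedMul_add_left, hf, hf']) (fun a g x hx => ?_) f₁
  refine crossedProduct_induction F (P := fun f => crossedMul F α' (crossedMul F α' _ f) f₃
      = crossedMul F α' _ (crossedMul F α' f f₃))
    (by simp only [crossedMul_zero_left, crossedMul_zero_right])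
    (fun f f' hf hf' => by simp only [crossedMul_add_left, crossedMul_add_right, hf, hf'])
    (fun b h y hy => ?_) f₂
  refine crossedProduct_induction F (P := fun f => crossedMul F α' (crossedMul F α' _ _) f
      = crossedMul F α' _ (crossedMul F α' _ f)) (by simp only [crossedMul_zero_right])
    (fun f f' hf hf' => by simp only [crossedMul_add_right, hf, hf']) (fun c l z hz => ?_) f₃
  rw [crossedMul_single F α' hx hy, crossedMul_single F α' (F.mul_mem g h x hx y hy) hz,
    crossedMul_single F α' hy hz, crossedMul_single F α' hx (F.mul_mem h l y hy z hz),
    F.mul_assoc']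
  congr 1
  calc a * b * α' g h * c * α' (g * h) l = a * b * c * (α' g h * α' (g * h) l) := by
        simp only [mul_left_comm, mul_comm]
    _ = a * (b * c * α' h l) * α' g (h * l) := by
        rw [hcoc]
        simp only [mul_assoc]

theorem crossedIota_one_crossedMul
    (hcoc : ∀ g h l : G, α' g h * α' (g * h) l = α' h l * α' g (h * l))
    (hnorm : α' 1 1 = 1) (f : H → A) : crossedMul F α' (crossedIota F.one) f = f := by
  refine crossedProduct_induction F (P := fun f => crossedMul F α' (crossedIota F.one) f = f)
    (crossedMul_zero_right F α' _)
    (fun f f' hf hf' => by rw [crossedMul_add_right, hf, hf']) (fun a g x hx => ?_) f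
  rw [crossedIota_eq_single, crossedMul_single F α' F.one_mem hx,
    cocycle_one_left hcoc hnorm, F.one_mul', one_mul, mul_one]

theorem crossedMul_crossedIota_one
    (hcoc : ∀ g h l : G, α' g h * α' (g * h) l = α' h l * α' g (h * l))
    (hnorm : α' 1 1 = 1) (f : H → A) : crossedMul F α' f (crossedIota F.one) = f := by
  refine crossedProduct_induction F (P := fun f => crossedMul F α' f (crossedIota F.one) = f)
    (crossedMul_zero_left F α' _)
    (fun f f' hf hf' => by rw [crossedMul_add_left, hf, hf']) (fun a g x hx => ?_) f
  rw [crossedIota_eq_single, crossedMul_single F α' hx F.one_mem,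
    cocycle_one_right hcoc hnorm, F.mul_one', mul_one, mul_one]

end CrossedProduct

/-- Let `α' : G × G → H` be a normalized 2-cocycle with values in a finite
abelian group `H`, `χ : H → kˣ` a character, and `α := χ ∘ α'` its transgression. For any
`G`-Frobenius algebra `A`, the crossed product `A^{α'} = ⊕_{(a,g) ∈ H×G} A_g ⊗ k·a` with
multiplication `(x⊗a)(y⊗a') = (x·y)⊗(a·a'·α'(g,g'))`:
(i) is a `G^{α'}`-graded associative unital `k`-algebra with unit `1 ⊗ e_H`, the grading
being over `G^{α'} = H × G` with `(a,g)·(a',g') = (a·a'·α'(g,g'), g·g')`;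
(ii) satisfies `res(i(x)·i(y)) = α(g,g')·(x·y)` for homogeneous `x ∈ A_g`, `y ∈ A_{g'}`,
i.e. the discrete-torsion twist `A_α` lifts to `A^{α'}`. -/
theorem crossed_product_lifts_twist (G : Type) [Group G] [Fintype G]
    (H : Type) [CommGroup H] [Fintype H] [DecidableEq H]
    (k : Type) [Field k] [CharZero k]
    (A : Type) [AddCommGroup A] [Module k A] (F : GFrobeniusAlgebra G k A)
    (α' : G → G → H)
    (hcoc : ∀ g h l : G, α' g h * α' (g * h) l = α' h l * α' g (h * l))
    (hnorm : α' 1 1 = 1)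
    (χH : H →* kˣ)
    (α : G → G → kˣ) (hα : ∀ g g' : G, α g g' = χH (α' g g')) :
    -- (i) `A^{α'}` is a `G^{α'}`-graded associative unital `k`-algebra:
    -- the multiplication is `k`-bilinear,
    ((∀ f₁ f₂ f₃ : H → A,
        crossedMul F α' (f₁ + f₂) f₃ = crossedMul F α' f₁ f₃ + crossedMul F α' f₂ f₃) ∧
      (∀ f₁ f₂ f₃ : H → A,
        crossedMul F α' f₁ (f₂ + f₃) = crossedMul F α' f₁ f₂ + crossedMul F α' f₁ f₃) ∧
      (∀ (c : k) (f₁ f₂ : H → A),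
        crossedMul F α' (c • f₁) f₂ = c • crossedMul F α' f₁ f₂) ∧
      (∀ (c : k) (f₁ f₂ : H → A),
        crossedMul F α' f₁ (c • f₂) = c • crossedMul F α' f₁ f₂) ∧
      -- associative,
      (∀ f₁ f₂ f₃ : H → A,
        crossedMul F α' (crossedMul F α' f₁ f₂) f₃
          = crossedMul F α' f₁ (crossedMul F α' f₂ f₃)) ∧
      -- unital with unit `1 ⊗ e_H`,
      (crossedIota F.one ∈ crossedGrading F ((1 : H), (1 : G))) ∧
      (∀ f : H → A, crossedMul F α' (crossedIota F.one) f = f) ∧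
      (∀ f : H → A, crossedMul F α' f (crossedIota F.one) = f) ∧
      -- and respects the `G^{α'} = H × G` grading:
      (∀ p q : H × G, ∀ f ∈ crossedGrading F p, ∀ f' ∈ crossedGrading F q,
        crossedMul F α' f f'
          ∈ crossedGrading F (p.1 * q.1 * α' p.2 q.2, p.2 * q.2))) ∧
    -- (ii) the twist `A_α` lifts to `A^{α'}`: `res ∘ μ^{α'} ∘ (i ⊗ i)` is the twisted
    -- multiplication of `A_α`
    (∀ g g' : G, ∀ x ∈ F.grading g, ∀ y ∈ F.grading g',
      crossedRes χH (crossedMul F α' (crossedIota x) (crossedIota y))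
        = ((α g g' : kˣ) : k) • F.mul x y) := by
  refine ⟨⟨crossedMul_add_left F α', crossedMul_add_right F α', crossedMul_smul_left F α',
    crossedMul_smul_right F α', crossedMul_assoc F hcoc, ?_,
    crossedIota_one_crossedMul F hcoc hnorm, crossedMul_crossedIota_one F hcoc hnorm, ?_⟩, ?_⟩
  · rw [crossedIota_eq_single]
    exact single_mem_crossedGrading F F.one_mem
  · intro p q f hf f' hf'
    rw [eq_single_of_mem_crossedGrading F hf, eq_single_of_mem_crossedGrading F hf',
      crossedMul_single F α' hf.1 hf'.1]
    exact single_mem_crossedGrading F (F.mul_mem _ _ _ hf.1 _ hf'.1)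
  · intro g g' x hx y hy
    rw [crossedIota_eq_single, crossedIota_eq_single, crossedMul_single F α' hx hy,
      crossedRes_single, one_mul, one_mul, hα]
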